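/- arXiv:2403.00693 — 2 statements merged into one kernel-verified Lean document; each statement's English description precedes it below -/
import Mathlib

section
/- Let 0 < r < 1 and let S_i(x) = r x + d_i, i = 1, …, n, be an equicontractive iterated function system on ℝ whose attractor is the interval [0, 1]. Then the IFS satisfies the weak separation property if and only if there exists c > 0 such that for every k ≥ 0, all words σ, τ of length k over {1,…,n}, and all z, w ∈ {0, 1}, either S_σ(z) = S_τ(w) or |S_σ(z) − S_τ(w)| > c r^k. -/
open Set

/-- For a word σ = (s₁,…,s_k), the composition S_σ = S_{s₁} ∘ ⋯ ∘ S_{s_k}. -/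
def compW {n : ℕ} (S : Fin n → ℝ → ℝ) : List (Fin n) → ℝ → ℝ
  | [] => id
  | i :: σ => S i ∘ compW S σ

/-!
Let `D` be the set of all translations `a_{σ,τ}`. The weak separation property says that `0` is not
an accumulation point of `D`, and since `S_σ z - S_τ w = r ^ k * (z - w - a_{σ,τ})`, the endpoint
condition says that none of `0`, `1`, `-1` is one. As `D = -D`, it remains to pass from `0` to `1`.

Following Zerner, pick a word `σ` whose set of neighbouring cylinder positions has maximal
cardinality. Prefixing further letters to `σ` does not change this set, which makes `D ∩ [-t, t]`
finite for every `t < 1`. Appending a letter to each of two words whose translation lies below `1`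
either divides the gap between that translation and `1` by `r` or produces a translation from a
fixed finite set, so by induction the elements of `D` below `1` stay away from `1`. If `a ∈ D`
exceeds `1`, a cylinder through a point of the hole between `S_σ [0, 1]` and `S_τ [0, 1]` writes `a`
as a sum of two positive elements of `D`; these are bounded away from `0`, so for `a` near `1` they
are also bounded away from `1` and only finitely many sums occur.
-/

section

open Filter Metric Topology

theorem not_accPt_principal_iff {X : Type*} [PseudoMetricSpace X] {A : Set X} {x : X} :
    ¬AccPt x (𝓟 A) ↔ ∃ δ > 0, ∀ a ∈ A, a ≠ x → δ ≤ dist a x := by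
  simp only [accPt_iff_frequently, not_frequently, Metric.eventually_nhds_iff]
  refine exists_congr fun δ => and_congr_right fun _ => forall_congr' fun a => ?_
  grind

theorem eventually_forall_lt_dist_of_not_accPt {X : Type*} [PseudoMetricSpace X] {A : Set X}
    {x : X} (h : ¬AccPt x (𝓟 A)) : ∀ᶠ δ in 𝓝[>] (0 : ℝ), ∀ a ∈ A, a ≠ x → δ < dist a x := by
  obtain ⟨ε, hε, hA⟩ := not_accPt_principal_iff.1 h
  filter_upwards [Ioo_mem_nhdsGT hε] with δ hδ a ha hax
  exact hδ.2.trans_le (hA a ha hax)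

theorem packingNumber_lt_top_of_isCompact {X : Type*} [PseudoEMetricSpace X] {K : Set X}
    (hK : IsCompact K) {ε : NNReal} (hε : ε ≠ 0) : packingNumber ε K < ⊤ := by
  obtain ⟨N, -, hN, hcover⟩ := exists_finite_isCover_of_isCompact (half_pos hε.bot_lt).ne' hK
  calc packingNumber ε K = packingNumber (2 * (ε / 2)) K := by rw [mul_div_cancel₀ _ two_ne_zero]
    _ ≤ externalCoveringNumber (ε / 2) K := packingNumber_two_mul_le_externalCoveringNumber _ _
    _ ≤ N.encard := hcover.externalCoveringNumber_le_encard
    _ < ⊤ := hN.encard_lt_top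

variable {n : ℕ} {S : Fin n → ℝ → ℝ} {K : Set ℝ} {r : ℝ}

theorem compW_append (σ τ : List (Fin n)) (x : ℝ) :
    compW S (σ ++ τ) x = compW S σ (compW S τ x) := by
  induction σ with
  | nil => rfl
  | cons i σ ih => exact congrArg (S i) ih

theorem compW_mem (hK : ⋃ i, S i '' K ⊆ K) (σ : List (Fin n)) {x : ℝ} (hx : x ∈ K) :
    compW S σ x ∈ K := by
  induction σ with
  | nil => exact hx
  | cons i σ ih => exact hK (mem_iUnion.2 ⟨i, mem_image_of_mem _ ih⟩)

theorem exists_compW_eq (hK : K ⊆ ⋃ i, S i '' K) (k : ℕ) {x : ℝ} (hx : x ∈ K) :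
    ∃ σ : List (Fin n), σ.length = k ∧ ∃ y ∈ K, compW S σ y = x := by
  induction k generalizing x with
  | zero => exact ⟨[], rfl, x, hx, rfl⟩
  | succ k ih =>
    obtain ⟨i, y, hy, rfl⟩ := mem_iUnion.1 (hK hx)
    obtain ⟨σ, rfl, z, hz, rfl⟩ := ih hy
    exact ⟨i :: σ, rfl, z, hz, rfl⟩

theorem compW_add (hS : ∀ i x y, S i (x + y) = S i x + r * y) (σ : List (Fin n)) (x y : ℝ) :
    compW S σ (x + y) = compW S σ x + r ^ σ.length * y := by
  induction σ with
  | nil => simp [compW]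
  | cons i σ ih =>
    simp only [compW, Function.comp_apply, ih, hS, List.length_cons]
    ring

theorem compW_sub_eq (hS : ∀ i x y, S i (x + y) = S i x + r * y) {σ τ : List (Fin n)}
    (hlen : σ.length = τ.length) {x y : ℝ} (h : compW S σ x = compW S τ y) :
    compW S σ (x - y) = compW S τ 0 := by
  have hσ := compW_add hS σ (x - y) y
  have hτ := compW_add hS τ 0 y
  rw [sub_add_cancel] at hσ
  rw [zero_add, ← hlen] at hτ
  linarith

theorem compW_eq_iff (hr : r ≠ 0) (hS : ∀ i x y, S i (x + y) = S i x + r * y)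
    {σ τ : List (Fin n)} {a : ℝ} :
    compW S σ a = compW S τ 0 ↔ a = (r ^ σ.length)⁻¹ * (compW S τ 0 - compW S σ 0) := by
  have h := compW_add hS σ 0 a
  rw [zero_add] at h
  rw [h, eq_inv_mul_iff_mul_eq₀ (pow_ne_zero _ hr), eq_sub_iff_add_eq']

/-- The set of all translations `a_{σ,τ}` of `S_σ⁻¹ ∘ S_τ : x ↦ x + a_{σ,τ}`, for words `σ`, `τ`
of the same length. The number `a_{σ,τ}` is encoded as the solution `a` of `S_σ(a) = S_τ(0)`. -/
def translations (S : Fin n → ℝ → ℝ) : Set ℝ :=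
  {a | ∃ σ τ : List (Fin n), σ.length = τ.length ∧ compW S σ a = compW S τ 0}

theorem neg_mem_translations (hS : ∀ i x y, S i (x + y) = S i x + r * y) {a : ℝ}
    (ha : a ∈ translations S) : -a ∈ translations S := by
  obtain ⟨σ, τ, hlen, h⟩ := ha
  exact ⟨τ, σ, hlen.symm, by simpa using compW_sub_eq hS hlen.symm h.symm⟩

-- If `a` is the translation of two words with last letters `i` and `j`, then `S i a - S j 0` is the
-- translation of the two words with these letters deleted, called the parent of `a` below.
theorem translations_induction (hS : ∀ i x y, S i (x + y) = S i x + r * y) {P : ℝ → Prop}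
    (zero : P 0)
    (step : ∀ i j a, S i a - S j 0 ∈ translations S → P (S i a - S j 0) → P a) :
    ∀ a ∈ translations S, P a := by
  rintro a ⟨σ, τ, hlen, h⟩
  induction σ using List.reverseRecOn generalizing τ a with
  | nil =>
    obtain rfl := List.length_eq_zero_iff.1 hlen.symm
    obtain rfl : a = 0 := h
    exact zero
  | append_singleton σ i ih =>
    obtain ⟨τ, j, rfl⟩ : ∃ τ' j, τ = τ' ++ [j] :=
      (List.eq_nil_or_concat' τ).resolve_left (by rintro rfl; simp at hlen)
    have hlen' : σ.length = τ.length := by simpa using hlen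
    rw [compW_append, compW_append] at h
    have hparent : compW S σ (S i a - S j 0) = compW S τ 0 := compW_sub_eq hS hlen' h
    exact step i j a ⟨σ, τ, hlen', hparent⟩ (ih _ _ hlen' hparent)

/-- The positions in `K` at which `S_σ(0)` is seen from the cylinders of the same level, that is,
the points `S_τ⁻¹(S_σ(0))` of `K` for words `τ` of the length of `σ`. -/
def relativePositions (S : Fin n → ℝ → ℝ) (K : Set ℝ) (σ : List (Fin n)) : Set ℝ :=
  {b ∈ K | ∃ τ : List (Fin n), τ.length = σ.length ∧ compW S τ b = compW S σ 0}

theorem relativePositions_subset_append (ω σ : List (Fin n)) :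
    relativePositions S K σ ⊆ relativePositions S K (ω ++ σ) := by
  rintro b ⟨hb, τ, hlen, h⟩
  exact ⟨hb, ω ++ τ, by simp [hlen], by rw [compW_append, compW_append, h]⟩

theorem exists_isSeparated_relativePositions (hS : ∀ i x y, S i (x + y) = S i x + r * y)
    (hD : ¬AccPt 0 (𝓟 (translations S))) :
    ∃ ε : NNReal, ε ≠ 0 ∧ ∀ (K : Set ℝ) (σ : List (Fin n)),
      IsSeparated ε (relativePositions S K σ) := by
  obtain ⟨ε, h, hε : 0 < ε⟩ :=
    ((eventually_forall_lt_dist_of_not_accPt hD).and self_mem_nhdsWithin).exists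
  lift ε to NNReal using hε.le
  refine ⟨ε, by exact_mod_cast hε.ne', fun K σ => ?_⟩
  rintro b ⟨-, τ, hτ, hb⟩ c ⟨-, τ', hτ', hc⟩ hne
  have hmem : b - c ∈ translations S :=
    ⟨τ, τ', hτ.trans hτ'.symm, compW_sub_eq hS (hτ.trans hτ'.symm) (hb.trans hc.symm)⟩
  have hlt := h (b - c) hmem (sub_ne_zero.2 hne)
  rw [dist_zero_right, ← dist_eq_norm] at hlt
  rw [edist_nndist]
  exact_mod_cast hlt

theorem exists_relativePositions_append_eq (hS : ∀ i x y, S i (x + y) = S i x + r * y)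
    (hK : IsCompact K) (hD : ¬AccPt 0 (𝓟 (translations S))) :
    ∃ σ : List (Fin n), (relativePositions S K σ).Finite ∧
      ∀ ω, relativePositions S K (ω ++ σ) = relativePositions S K σ := by
  obtain ⟨ε, hε, hsep⟩ := exists_isSeparated_relativePositions hS hD
  have hbound : ⨆ σ, (relativePositions S K σ).encard < ⊤ :=
    (iSup_le fun σ => (hsep K σ).encard_le_packingNumber fun _ hb => hb.1).trans_lt
      (packingNumber_lt_top_of_isCompact hK hε)
  have hfin (σ : List (Fin n)) : (relativePositions S K σ).Finite :=
    encard_lt_top_iff.1 ((le_iSup _ σ).trans_lt hbound)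
  obtain ⟨σ, hσ⟩ := ENat.exists_eq_iSup_of_lt_top hbound
  refine ⟨σ, hfin σ, fun ω => ?_⟩
  refine ((hfin σ).eq_of_subset_of_encard_le (relativePositions_subset_append ω σ) ?_).symm
  rw [hσ]
  exact le_iSup (fun σ => (relativePositions S K σ).encard) (ω ++ σ)

theorem exists_finite_translations_add_mem (hS : ∀ i x y, S i (x + y) = S i x + r * y)
    (hK : IsCompact K) (hcover : K ⊆ ⋃ i, S i '' K) (hD : ¬AccPt 0 (𝓟 (translations S))) :
    ∃ σ : List (Fin n), ∀ ω, {a ∈ translations S | a + compW S (ω ++ σ) 0 ∈ K}.Finite := by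
  obtain ⟨σ, hfin, hσ⟩ := exists_relativePositions_append_eq hS hK hD
  refine ⟨σ, fun ω => ?_⟩
  set x := compW S (ω ++ σ) 0
  have hwords : {ω' : List (Fin n) | ω'.length = (ω ++ σ).length}.Finite :=
    List.finite_length_eq _ _
  refine (hwords.image2 (fun ω' b => compW S ω' b - x) hfin).subset ?_
  rintro a ⟨⟨τ, σ', hlen, ha⟩, hax⟩
  obtain ⟨ω', hω', b, hb, hbx⟩ := exists_compW_eq hcover (ω ++ σ).length hax
  refine ⟨ω', hω', b, ?_, by simp only [hbx, add_sub_cancel_right]⟩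
  rw [← hσ (σ' ++ ω), List.append_assoc]
  refine ⟨hb, τ ++ ω', by simp only [List.length_append, hlen, hω'], ?_⟩
  calc compW S (τ ++ ω') b = compW S τ (a + x) := by rw [compW_append, hbx]
    _ = compW S τ a + r ^ τ.length * x := compW_add hS τ a x
    _ = compW S σ' 0 + r ^ σ'.length * x := by rw [ha, hlen]
    _ = compW S σ' x := by rw [← compW_add hS, zero_add]
    _ = compW S (σ' ++ (ω ++ σ)) 0 := (compW_append _ _ _).symm

theorem finite_translations_inter_Icc (hr0 : 0 < r) (hr1 : r < 1)
    (hS : ∀ i x y, S i (x + y) = S i x + r * y) (hattr : Icc (0 : ℝ) 1 = ⋃ i, S i '' Icc 0 1)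
    (hD : ¬AccPt 0 (𝓟 (translations S))) {t : ℝ} (ht : t < 1) :
    (translations S ∩ Icc (-t) t).Finite := by
  obtain ⟨σ, hσ⟩ := exists_finite_translations_add_mem hS isCompact_Icc hattr.subset hD
  obtain ⟨q, hq⟩ := exists_pow_lt_of_lt_one (sub_pos.2 ht) hr1
  obtain ⟨ω, rfl, y, hy, hω⟩ := exists_compW_eq hattr.subset q (left_mem_Icc.2 zero_le_one)
  have hω0 : compW S ω 0 ≤ 0 := by
    have := compW_add hS ω 0 y
    rw [zero_add, hω] at this
    linarith [mul_nonneg (pow_nonneg hr0.le ω.length) hy.1]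
  have hσ1 : compW S σ 0 ≤ 1 := (compW_mem hattr.superset σ (left_mem_Icc.2 zero_le_one)).2
  have hωσ : compW S (ω ++ σ) 0 ∈ Icc 0 (1 - t) := by
    refine ⟨(compW_mem hattr.superset _ (left_mem_Icc.2 zero_le_one)).1, ?_⟩
    calc compW S (ω ++ σ) 0 = compW S ω 0 + r ^ ω.length * compW S σ 0 := by
          rw [compW_append, ← compW_add hS, zero_add]
      _ ≤ r ^ ω.length := by
          linarith [mul_le_of_le_one_right (pow_nonneg hr0.le ω.length) hσ1]
      _ ≤ 1 - t := hq.le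
  have hnonneg : (translations S ∩ Icc 0 t).Finite := (hσ ω).subset fun a ha =>
    ⟨ha.1, add_nonneg ha.2.1 hωσ.1, by linarith [ha.2.2, hωσ.2]⟩
  refine (hnonneg.union hnonneg.neg).subset fun a ⟨ha, hat⟩ => ?_
  rcases le_total 0 a with h | h
  · exact Or.inl ⟨ha, h, hat.2⟩
  · exact Or.inr ⟨neg_mem_translations hS ha, neg_nonneg.2 h, neg_le.1 hat.1⟩

theorem exists_finite_or_one_sub_parent_eq (hr0 : 0 < r) (hr1 : r < 1)
    (hS : ∀ i x y, S i (x + y) = S i x + r * y) (hattr : Icc (0 : ℝ) 1 = ⋃ i, S i '' Icc 0 1)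
    (hD : ¬AccPt 0 (𝓟 (translations S))) :
    ∃ G : Set ℝ, G.Finite ∧ ∀ i j, ∀ a ∈ Ico (0 : ℝ) 1, S i a - S j 0 ∈ translations S →
      a ∈ G ∨ 1 - (S i a - S j 0) = r * (1 - a) := by
  have hmem (i : Fin n) {x : ℝ} (hx : x ∈ Icc (0 : ℝ) 1) : S i x ∈ Icc (0 : ℝ) 1 :=
    compW_mem hattr.superset [i] hx
  have h0 (i : Fin n) : 0 ≤ S i 0 := (hmem i (left_mem_Icc.2 zero_le_one)).1
  have h1 (i : Fin n) : S i 1 ≤ 1 := (hmem i (right_mem_Icc.2 zero_le_one)).2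
  have haffine (i : Fin n) (x y : ℝ) : S i y = S i x + r * (y - x) := by
    rw [← hS, add_sub_cancel]
  -- `gap (i, j)` vanishes if `S i` fixes `1` and `S j` fixes `0`; for all other letters the parent
  -- stays away from `1` and `-1`.
  let gap (p : Fin n × Fin n) : ℝ := 1 - S p.1 1 + S p.2 0
  obtain ⟨γ, hγ, hgap⟩ := not_accPt_principal_iff.1 fun h =>
    Infinite.of_accPt (x := (0 : ℝ)) h (finite_range gap)
  have hF := finite_translations_inter_Icc hr0 hr1 hS hattr hD
    (sub_lt_self 1 (lt_min hγ hr0))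
  have hinj (i j : Fin n) : Function.Injective fun a => S i a - S j 0 := fun a b hab => by
    have := haffine i a b
    simp only at hab
    nlinarith
  refine ⟨⋃ i, ⋃ j, (fun a => S i a - S j 0) ⁻¹' _, finite_iUnion fun i => finite_iUnion fun j =>
    hF.preimage (hinj i j).injOn, fun i j a ha hparent => ?_⟩
  have hone_sub : 1 - (S i a - S j 0) = r * (1 - a) + gap (i, j) := by
    simp only [gap]
    linarith [haffine i a 1]
  by_cases hzero : gap (i, j) = 0
  · exact Or.inr (by rw [hone_sub, hzero, add_zero])
  · refine Or.inl (mem_iUnion₂.2 ⟨i, j, hparent, ?_, ?_⟩)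
    · have := min_le_right γ r
      nlinarith [ha.1, haffine i 0 a, haffine j 0 1, h0 i, h1 j]
    · have hγ_le := hgap _ (mem_range_self (i, j)) hzero
      rw [Real.dist_0_eq_abs, abs_of_nonneg (by simp only [gap]; linarith [h1 i, h0 j])] at hγ_le
      nlinarith [ha.2, min_le_left γ r]

theorem exists_forall_translations_le_one_sub (hr0 : 0 < r) (hr1 : r < 1)
    (hS : ∀ i x y, S i (x + y) = S i x + r * y) (hattr : Icc (0 : ℝ) 1 = ⋃ i, S i '' Icc 0 1)
    (hD : ¬AccPt 0 (𝓟 (translations S))) :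
    ∃ δ > 0, ∀ a ∈ translations S, a < 1 → a ≤ 1 - δ := by
  obtain ⟨G, hG, hparent⟩ := exists_finite_or_one_sub_parent_eq hr0 hr1 hS hattr hD
  obtain ⟨δ, hδ, hGδ⟩ := not_accPt_principal_iff.1 fun h => Infinite.of_accPt (x := (1 : ℝ)) h hG
  have hδ1 : min δ 1 ≤ 1 := min_le_right δ 1
  refine ⟨min δ 1, lt_min hδ one_pos, translations_induction hS (fun _ => by linarith) ?_⟩
  intro i j a hb ih ha1
  rcases lt_or_ge a 0 with hneg | hnonneg
  · linarith
  rcases hparent i j a ⟨hnonneg, ha1⟩ hb with haG | hscale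
  · have := hGδ a haG ha1.ne
    rw [Real.dist_eq, abs_of_neg (sub_neg.2 ha1)] at this
    linarith [min_le_left δ 1]
  · have := ih (by nlinarith)
    nlinarith

theorem exists_translations_add_eq (hr0 : 0 < r) (hS : ∀ i x y, S i (x + y) = S i x + r * y)
    (hattr : Icc (0 : ℝ) 1 = ⋃ i, S i '' Icc 0 1) {a : ℝ} (ha : a ∈ translations S)
    (ha1 : 1 < a) :
    ∃ b ∈ translations S, ∃ c ∈ translations S, 0 < b ∧ 0 < c ∧ b + c = a := by
  obtain ⟨σ, τ, hlen, h⟩ := ha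
  obtain ⟨m, hm1, hma⟩ := exists_between ha1
  have hpow : 0 < r ^ σ.length := pow_pos hr0 _
  have hσm : compW S σ m ∈ Icc (0 : ℝ) 1 := by
    have hσ0 := (compW_mem hattr.superset σ (left_mem_Icc.2 zero_le_one)).1
    have hτ0 := (compW_mem hattr.superset τ (left_mem_Icc.2 zero_le_one)).2
    have h0m := compW_add hS σ 0 m
    have hmma := compW_add hS σ m (a - m)
    rw [zero_add] at h0m
    rw [add_sub_cancel, h] at hmma
    constructor <;> nlinarith
  obtain ⟨ρ, hρ, u, hu, hum⟩ := exists_compW_eq hattr.subset σ.length hσm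
  have hσa : compW S ρ (u + (a - m)) = compW S τ 0 := by
    rw [compW_add hS, hum, hρ, ← compW_add hS, add_sub_cancel, h]
  exact ⟨m - u, ⟨σ, ρ, hρ.symm, compW_sub_eq hS hρ.symm hum.symm⟩,
    u + (a - m), ⟨ρ, τ, hρ.trans hlen, hσa⟩, by linarith [hu.2], by linarith [hu.1], by ring⟩

theorem exists_forall_one_add_le_translations (hr0 : 0 < r) (hr1 : r < 1)
    (hS : ∀ i x y, S i (x + y) = S i x + r * y) (hattr : Icc (0 : ℝ) 1 = ⋃ i, S i '' Icc 0 1)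
    (hD : ¬AccPt 0 (𝓟 (translations S))) :
    ∃ δ > 0, ∀ a ∈ translations S, 1 < a → 1 + δ ≤ a := by
  obtain ⟨ε, hε, hDε⟩ := not_accPt_principal_iff.1 hD
  have hpos {b : ℝ} (hb : b ∈ translations S) (hb0 : 0 < b) : ε ≤ b := by
    simpa [Real.dist_0_eq_abs, abs_of_pos hb0] using hDε b hb hb0.ne'
  have hF := finite_translations_inter_Icc hr0 hr1 hS hattr hD (sub_lt_self 1 (half_pos hε))
  obtain ⟨δ, hδ, hsum⟩ := not_accPt_principal_iff.1 fun h =>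
    Infinite.of_accPt (x := (1 : ℝ)) h (hF.image2 (· + ·) hF)
  refine ⟨min (ε / 2) δ, lt_min (half_pos hε) hδ, fun a ha ha1 => ?_⟩
  by_contra! hlt
  have hlt_ε : a < 1 + ε / 2 := hlt.trans_le (by gcongr; exact min_le_left _ _)
  obtain ⟨b, hb, c, hc, hb0, hc0, rfl⟩ := exists_translations_add_eq hr0 hS hattr ha ha1
  have hεb := hpos hb hb0
  have hεc := hpos hc hc0
  have hδ_le := hsum (b + c) ⟨b, ⟨hb, by linarith, by linarith⟩, c,
    ⟨hc, by linarith, by linarith⟩, rfl⟩ ha1.ne'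
  rw [Real.dist_eq, abs_of_pos (sub_pos.2 ha1)] at hδ_le
  linarith [min_le_right (ε / 2) δ]

theorem not_accPt_one_translations (hr0 : 0 < r) (hr1 : r < 1)
    (hS : ∀ i x y, S i (x + y) = S i x + r * y) (hattr : Icc (0 : ℝ) 1 = ⋃ i, S i '' Icc 0 1)
    (hD : ¬AccPt 0 (𝓟 (translations S))) : ¬AccPt 1 (𝓟 (translations S)) := by
  obtain ⟨δ, hδ, hbelow⟩ := exists_forall_translations_le_one_sub hr0 hr1 hS hattr hD
  obtain ⟨δ', hδ', habove⟩ := exists_forall_one_add_le_translations hr0 hr1 hS hattr hD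
  refine not_accPt_principal_iff.2 ⟨min δ δ', lt_min hδ hδ', fun a ha hne => ?_⟩
  rw [Real.dist_eq]
  rcases lt_or_gt_of_ne hne with h | h
  · exact (min_le_left δ δ').trans (le_abs.2 (Or.inr (by linarith [hbelow a ha h])))
  · exact (min_le_right δ δ').trans (le_abs.2 (Or.inl (by linarith [habove a ha h])))

theorem accPt_neg_translations_iff (hS : ∀ i x y, S i (x + y) = S i x + r * y) {x : ℝ} :
    AccPt (-x) (𝓟 (translations S)) ↔ AccPt x (𝓟 (translations S)) := by
  have hmaps : MapsTo Neg.neg (translations S) (translations S) :=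
    fun _ => neg_mem_translations hS
  have hneg {y : ℝ} (h : AccPt y (𝓟 (translations S))) : AccPt (-y) (𝓟 (translations S)) :=
    (h.map continuous_neg.continuousAt neg_injective).mono (tendsto_principal_principal.2 hmaps)
  exact ⟨fun h => by simpa using hneg h, hneg⟩

theorem weakSeparation_iff_not_accPt (hr : r ≠ 0)
    (hS : ∀ i x y, S i (x + y) = S i x + r * y) :
    (∃ ε > 0, ∀ σ τ : List (Fin n), σ.length = τ.length →
      (r ^ σ.length)⁻¹ * (compW S τ 0 - compW S σ 0) ≠ 0 →
      ε ≤ |(r ^ σ.length)⁻¹ * (compW S τ 0 - compW S σ 0)|) ↔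
    ¬AccPt 0 (𝓟 (translations S)) := by
  simp only [not_accPt_principal_iff, translations, mem_ofPred_eq, compW_eq_iff hr hS,
    Real.dist_0_eq_abs]
  grind

theorem compW_sub_compW (hS : ∀ i x y, S i (x + y) = S i x + r * y) {σ τ : List (Fin n)}
    (hlen : σ.length = τ.length) {a : ℝ} (h : compW S σ a = compW S τ 0) (z w : ℝ) :
    compW S σ z - compW S τ w = r ^ σ.length * (z - w - a) := by
  calc compW S σ z - compW S τ w
      = compW S σ (a + (z - a)) - compW S τ (0 + w) := by rw [add_sub_cancel, zero_add]
    _ = (compW S σ a + r ^ σ.length * (z - a)) - (compW S τ 0 + r ^ τ.length * w) := by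
      rw [compW_add hS, compW_add hS]
    _ = r ^ σ.length * (z - w - a) := by
      rw [h, ← hlen]
      ring

theorem compW_eq_or_lt_abs_sub_iff (hr : 0 < r) (hS : ∀ i x y, S i (x + y) = S i x + r * y)
    {c z w : ℝ} :
    (∀ σ τ : List (Fin n), σ.length = τ.length →
      compW S σ z = compW S τ w ∨ c * r ^ σ.length < |compW S σ z - compW S τ w|) ↔
    ∀ a ∈ translations S, a ≠ z - w → c < dist a (z - w) := by
  have hiff {σ τ : List (Fin n)} (hlen : σ.length = τ.length) {a : ℝ}
      (ha : compW S σ a = compW S τ 0) :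
      (compW S σ z = compW S τ w ∨ c * r ^ σ.length < |compW S σ z - compW S τ w|) ↔
        (a ≠ z - w → c < dist a (z - w)) := by
    have hpow : 0 < r ^ σ.length := pow_pos hr _
    rw [← sub_eq_zero, compW_sub_compW hS hlen ha, abs_mul, abs_of_pos hpow,
      mul_comm c, mul_lt_mul_iff_right₀ hpow, mul_eq_zero, or_iff_right hpow.ne', sub_eq_zero,
      dist_comm, Real.dist_eq, eq_comm, or_iff_not_imp_left]
  constructor
  · rintro h a ⟨σ, τ, hlen, ha⟩
    exact (hiff hlen ha).1 (h σ τ hlen)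
  · intro h σ τ hlen
    have ha := (compW_eq_iff hr.ne' hS (σ := σ) (τ := τ)).2 rfl
    exact (hiff hlen ha).2 (h _ ⟨σ, τ, hlen, ha⟩)

theorem endpointSeparation_iff_not_accPt (hr : 0 < r)
    (hS : ∀ i x y, S i (x + y) = S i x + r * y) {Z : Set ℝ} (hZ : Z.Finite) :
    (∃ c > 0, ∀ σ τ : List (Fin n), σ.length = τ.length → ∀ z ∈ Z, ∀ w ∈ Z,
      compW S σ z = compW S τ w ∨ c * r ^ σ.length < |compW S σ z - compW S τ w|) ↔
    ∀ z ∈ Z, ∀ w ∈ Z, ¬AccPt (z - w) (𝓟 (translations S)) := by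
  constructor
  · rintro ⟨c, hc, h⟩ z hz w hw
    have hD := (compW_eq_or_lt_abs_sub_iff hr hS).1 fun σ τ hlen => h σ τ hlen z hz w hw
    exact not_accPt_principal_iff.2 ⟨c, hc, fun a ha hne => (hD a ha hne).le⟩
  · intro h
    have huniform : ∀ᶠ c in 𝓝[>] (0 : ℝ), ∀ z ∈ Z, ∀ w ∈ Z, ∀ a ∈ translations S,
        a ≠ z - w → c < dist a (z - w) :=
      (eventually_all_finite hZ).2 fun z hz => (eventually_all_finite hZ).2 fun w hw =>
        eventually_forall_lt_dist_of_not_accPt (h z hz w hw)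
    obtain ⟨c, hD, hc⟩ := (huniform.and self_mem_nhdsWithin).exists
    exact ⟨c, hc, fun σ τ hlen z hz w hw =>
      (compW_eq_or_lt_abs_sub_iff hr hS).2 (hD z hz w hw) σ τ hlen⟩

end

theorem stmt14 {n : ℕ} (r : ℝ) (hr0 : 0 < r) (hr1 : r < 1)
    (d : Fin n → ℝ) (S : Fin n → ℝ → ℝ) (hS : ∀ i x, S i x = r * x + d i)
    (hattr : Icc (0 : ℝ) 1 = ⋃ i, S i '' Icc 0 1) :
    (∃ ε > 0, ∀ σ τ : List (Fin n), σ.length = τ.length →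
      (r ^ σ.length)⁻¹ * (compW S τ 0 - compW S σ 0) ≠ 0 →
      ε ≤ |(r ^ σ.length)⁻¹ * (compW S τ 0 - compW S σ 0)|) ↔
    (∃ c > 0, ∀ σ τ : List (Fin n), σ.length = τ.length →
      ∀ z ∈ ({0, 1} : Set ℝ), ∀ w ∈ ({0, 1} : Set ℝ),
        compW S σ z = compW S τ w ∨
          c * r ^ σ.length < |compW S σ z - compW S τ w|) := by
  have hS' (i : Fin n) (x y : ℝ) : S i (x + y) = S i x + r * y := by
    simp only [hS]
    ring
  rw [weakSeparation_iff_not_accPt hr0.ne' hS',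
    endpointSeparation_iff_not_accPt hr0 hS' (toFinite {0, 1})]
  constructor
  · intro h0
    have h1 := not_accPt_one_translations hr0 hr1 hS' hattr h0
    have hneg := (accPt_neg_translations_iff hS').not.2 h1
    rintro z (rfl | rfl) w (rfl | rfl) <;> simpa
  · intro h
    simpa using h 0 (by simp) 0 (by simp)
end

section
/- There exists a real number a ∈ (0, 1/7) such that the iterated function system 𝒮₁(a) = {x/7, x/7 + a, x/7 + 6/7} satisfies the weak separation property and the endpoint separation condition (there exists c > 0 such that for every k ≥ 0, all words σ, τ of length k and all z, w ∈ {0,1}, either S_σ(z) = S_τ(w) or |S_σ(z) − S_τ(w)| > c · 7^{−k}), yet 𝒮₁(a) does not satisfy the convex finite type condition; moreover its attractor K satisfies {0,1} ⊆ K ⊆ [0,1] and K ≠ [0,1]. -/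
/-!
Appending letters `i`, `j` to two words of equal length turns their translation amount `x` into
`7 * x + (dⱼ - dᵢ)`, where the digits `d` are `0`, `b = 7 * a` and `6`. An amount outside `[-1, 1]`
is only ever pushed further out, and `b` itself lies in `(0, 1)`, so everything is governed by the
orbit of `b` under the branches `x ↦ 7 * x - 6` and `x ↦ 7 * x - b` that keep it in `(0, 1)`. If
this orbit stays in a compact subinterval of `(1 - b, 1)`, then up to sign the only amounts in
`(-1, 1)` are `0` and the points of the orbit, and both separation conditions hold; if the orbit is
moreover infinite, the convex finite type condition fails.

The substitution `x = 1 - (6 - b) * s` conjugates the two branches to `s ↦ 7 * s` and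
`s ↦ 7 * s - 1`, i.e. to the shift on base `7` expansions with digits `0` and `1`. The required
orbit is therefore encoded by a digit sequence that starts with `0`, is not eventually periodic and
has blocks of zeros of bounded length; the indicator of the non-squares is one.
-/

open Set

/-- The IFS 𝒮₁(a) = {x/7, x/7 + a, x/7 + 6/7} on ℝ. -/
noncomputable def S1 (a : ℝ) : Fin 3 → ℝ → ℝ :=
  ![fun x => x / 7, fun x => x / 7 + a, fun x => x / 7 + 6 / 7]

/-- For a word σ = (s₁,…,s_k), the composition S_σ = S_{s₁} ∘ ⋯ ∘ S_{s_k}. -/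
noncomputable def Sw1 (a : ℝ) : List (Fin 3) → ℝ → ℝ
  | [] => id
  | i :: σ => S1 a i ∘ Sw1 a σ

/-- For words σ, τ of the same length k, S_σ⁻¹ ∘ S_τ is the translation by
`amt1 a σ τ = 7 ^ k * (S_τ(0) − S_σ(0))`. -/
noncomputable def amt1 (a : ℝ) (σ τ : List (Fin 3)) : ℝ :=
  7 ^ σ.length * (Sw1 a τ 0 - Sw1 a σ 0)

/-- The weak separation property for 𝒮₁(a): the nonzero translation amounts
`a_{σ,τ}` over pairs of words of equal length are bounded away from 0. -/
def WSP1 (a : ℝ) : Prop :=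
  ∃ ε > 0, ∀ σ τ : List (Fin 3), σ.length = τ.length →
    amt1 a σ τ ≠ 0 → ε ≤ |amt1 a σ τ|

/-- The neighbourhood type of a word σ relative to the open interval (0,1). -/
noncomputable def Ntype1 (a : ℝ) (σ : List (Fin 3)) : Set ℝ :=
  { t | ∃ τ : List (Fin 3), τ.length = σ.length ∧
      (Sw1 a σ '' Ioo 0 1 ∩ Sw1 a τ '' Ioo 0 1).Nonempty ∧ t = amt1 a σ τ }

/-- The convex finite type condition: only finitely many neighbourhood types
relative to (0,1). -/
def FTCco1 (a : ℝ) : Prop := (Set.range (Ntype1 a)).Finite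

section BaseExpansion

variable {b : ℕ}

theorem ofDigits_eq_head_add_tail_div (d : ℕ → Fin b) :
    Real.ofDigits d = ((d 0 : ℕ) + Real.ofDigits fun n => d (n + 1)) / b := by
  rw [Real.ofDigits_eq_sum_add_ofDigits d 1]
  simp only [Finset.sum_range_one, Real.ofDigitsTerm, zero_add, pow_one]
  ring

theorem inv_pow_le_ofDigits {d : ℕ → Fin b} {n : ℕ} (hd : 0 < (d n : ℕ)) :
    ((b : ℝ) ^ (n + 1))⁻¹ ≤ Real.ofDigits d :=
  calc ((b : ℝ) ^ (n + 1))⁻¹ ≤ Real.ofDigitsTerm d n :=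
        le_mul_of_one_le_left (by positivity) (by exact_mod_cast hd)
    _ ≤ Real.ofDigits d :=
        Real.summable_ofDigitsTerm.le_tsum n fun _ _ => Real.ofDigitsTerm_nonneg

theorem ofDigits_le_div {c : ℕ} {d : ℕ → Fin b} (hb : 1 < b) (hd : ∀ n, (d n : ℕ) ≤ c) :
    Real.ofDigits d ≤ c / (b - 1) := by
  have hb' : (1 : ℝ) < b := by exact_mod_cast hb
  have hsub : (b : ℝ) - 1 ≠ 0 := by linarith
  have geometric : HasSum (fun n => (c / b : ℝ) * (b⁻¹ : ℝ) ^ n) (c / (b - 1)) := by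
    have hvalue : (c : ℝ) / (b - 1) = c / b * (1 - (b : ℝ)⁻¹)⁻¹ := by
      field_simp
    rw [hvalue]
    exact (hasSum_geometric_of_lt_one (by positivity) (inv_lt_one_of_one_lt₀ hb')).mul_left _
  refine Summable.tsum_le_of_sum_le Real.summable_ofDigitsTerm fun s => ?_
  refine (Finset.sum_le_sum fun n _ => ?_).trans
    (sum_le_hasSum s (fun _ _ => by positivity) geometric)
  calc Real.ofDigitsTerm d n ≤ c * ((b : ℝ) ^ (n + 1))⁻¹ := by
        unfold Real.ofDigitsTerm
        gcongr
        exact_mod_cast hd n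
    _ = c / b * (b⁻¹ : ℝ) ^ n := by
        rw [pow_succ, inv_pow]
        ring

theorem head_eq_and_tail_eq_of_ofDigits_eq {c : ℕ} (hc : c + 1 < b) {d e : ℕ → Fin b}
    (hd : ∀ n, (d n : ℕ) ≤ c) (he : ∀ n, (e n : ℕ) ≤ c)
    (h : Real.ofDigits d = Real.ofDigits e) :
    d 0 = e 0 ∧ (Real.ofDigits fun n => d (n + 1)) = Real.ofDigits fun n => e (n + 1) := by
  have hb : (c : ℝ) + 1 < b := by exact_mod_cast hc
  have tail_lt_one {f : ℕ → Fin b} (hf : ∀ n, (f n : ℕ) ≤ c) :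
      Real.ofDigits (fun n => f (n + 1)) < 1 :=
    (ofDigits_le_div (by lia) fun n => hf (n + 1)).trans_lt <| by
      rw [div_lt_one (by linarith [(c.cast_nonneg : (0 : ℝ) ≤ c)])]
      linarith
  have hsum : ((d 0 : ℕ) : ℝ) + Real.ofDigits (fun n => d (n + 1)) =
      ((e 0 : ℕ) : ℝ) + Real.ofDigits fun n => e (n + 1) := by
    rw [ofDigits_eq_head_add_tail_div d, ofDigits_eq_head_add_tail_div e] at h
    exact (div_left_inj' (by linarith [(c.cast_nonneg : (0 : ℝ) ≤ c)])).mp h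
  have hfloor : (d 0 : ℕ) = (e 0 : ℕ) := by
    have h := congrArg Int.floor hsum
    rw [Int.floor_natCast_add, Int.floor_natCast_add,
      Int.floor_eq_zero_iff.mpr ⟨Real.ofDigits_nonneg _, tail_lt_one hd⟩,
      Int.floor_eq_zero_iff.mpr ⟨Real.ofDigits_nonneg _, tail_lt_one he⟩] at h
    exact_mod_cast h
  exact ⟨Fin.ext hfloor, by rw [hfloor] at hsum; exact add_left_cancel hsum⟩

theorem injOn_ofDigits {c : ℕ} (hc : c + 1 < b) :
    InjOn (Real.ofDigits (b := b)) {d | ∀ n, (d n : ℕ) ≤ c} := by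
  intro d hd e he h
  funext n
  induction n generalizing d e with
  | zero => exact (head_eq_and_tail_eq_of_ofDigits_eq hc hd he h).1
  | succ _ ih =>
    exact ih (fun n => hd (n + 1)) (fun n => he (n + 1))
      (head_eq_and_tail_eq_of_ofDigits_eq hc hd he h).2

end BaseExpansion

section NonsquareDigits

/-- The indicator of the non-squares as a sequence of base `7` digits: a concrete sequence that is
not eventually periodic and has bounded blocks of zeros. -/
def nonsquareDigit (n : ℕ) : Fin 7 := if IsSquare n then 0 else 1

theorem nonsquareDigit_of_isSquare {n : ℕ} (h : IsSquare n) : nonsquareDigit n = 0 := if_pos h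

theorem nonsquareDigit_of_not_isSquare {n : ℕ} (h : ¬IsSquare n) : nonsquareDigit n = 1 := if_neg h

theorem nonsquareDigit_le_one (n : ℕ) : (nonsquareDigit n : ℕ) ≤ 1 := by
  unfold nonsquareDigit
  split_ifs <;> simp

theorem not_isSquare_of_lt_of_lt {m n : ℕ} (hl : m * m < n) (hr : n < (m + 1) * (m + 1)) :
    ¬IsSquare n :=
  fun ⟨r, hr'⟩ => Nat.not_exists_sq hl hr ⟨r, hr'.symm⟩

theorem nonsquareDigit_add_one_or_add_two (m : ℕ) :
    nonsquareDigit (m + 1) = 1 ∨ nonsquareDigit (m + 2) = 1 := by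
  by_cases h : IsSquare (m + 1)
  · obtain ⟨r, hr⟩ := h
    have hr0 : 0 < r := Nat.pos_of_ne_zero (by rintro rfl; lia)
    exact .inr <| nonsquareDigit_of_not_isSquare <|
      not_isSquare_of_lt_of_lt (m := r) (by lia) (by lia)
  · exact .inl (nonsquareDigit_of_not_isSquare h)

theorem nonsquareDigit_shift_ne {i j : ℕ} (hij : i < j) :
    (fun n => nonsquareDigit (n + i)) ≠ fun n => nonsquareDigit (n + j) := by
  intro h
  have hle : i ≤ j * j := hij.le.trans (Nat.le_mul_self j)
  have hsquare : nonsquareDigit (j * j - i + i) = 0 :=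
    nonsquareDigit_of_isSquare ⟨j, by lia⟩
  have hnonsquare : nonsquareDigit (j * j - i + j) = 1 :=
    nonsquareDigit_of_not_isSquare <| not_isSquare_of_lt_of_lt (m := j) (by lia) (by lia)
  have := congrFun h (j * j - i)
  simp only [hsquare, hnonsquare] at this
  exact absurd this (by decide)

theorem nonsquareDigit_shift_injective :
    Function.Injective fun m n => nonsquareDigit (n + m) := by
  intro i j h
  rcases lt_trichotomy i j with hij | rfl | hji
  · exact absurd h (nonsquareDigit_shift_ne hij)
  · rfl
  · exact absurd h.symm (nonsquareDigit_shift_ne hji)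

/-- The number whose base `7` expansion is the sequence `nonsquareDigit` with its first `m` terms
removed. -/
noncomputable def nonsquareTail (m : ℕ) : ℝ := Real.ofDigits fun n => nonsquareDigit (n + m)

theorem nonsquareTail_eq (m : ℕ) :
    nonsquareTail m = ((nonsquareDigit m : ℕ) + nonsquareTail (m + 1)) / 7 := by
  unfold nonsquareTail
  rw [ofDigits_eq_head_add_tail_div]
  simp only [zero_add, Nat.cast_ofNat, add_assoc, add_comm 1 m]

theorem nonsquareTail_succ (m : ℕ) :
    nonsquareTail (m + 1) = 7 * nonsquareTail m ∨
      nonsquareTail (m + 1) = 7 * nonsquareTail m - 1 := by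
  have h := nonsquareTail_eq m
  rcases Nat.le_one_iff_eq_zero_or_eq_one.mp (nonsquareDigit_le_one m) with h0 | h1
  · left
    rw [h0, Nat.cast_zero] at h
    linarith
  · right
    rw [h1, Nat.cast_one] at h
    linarith

theorem nonsquareTail_le (m : ℕ) : nonsquareTail m ≤ 1 / 6 := by
  have h := ofDigits_le_div (by norm_num) fun n => nonsquareDigit_le_one (n + m)
  norm_num at h
  exact h

theorem le_nonsquareTail (m : ℕ) : 1 / 343 ≤ nonsquareTail m := by
  rcases nonsquareDigit_add_one_or_add_two m with h | h
  · have := inv_pow_le_ofDigits (d := fun n => nonsquareDigit (n + m)) (n := 1)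
      (by simp [add_comm 1 m, h])
    norm_num at this
    unfold nonsquareTail
    linarith
  · have := inv_pow_le_ofDigits (d := fun n => nonsquareDigit (n + m)) (n := 2)
      (by simp [add_comm 2 m, h])
    norm_num at this
    exact this

theorem nonsquareTail_zero_le : nonsquareTail 0 ≤ 1 / 42 := by
  rw [nonsquareTail_eq, nonsquareDigit_of_isSquare IsSquare.zero, Fin.val_zero, Nat.cast_zero]
  linarith [nonsquareTail_le (0 + 1)]

theorem nonsquareTail_injective : Function.Injective nonsquareTail := fun i j h =>
  nonsquareDigit_shift_injective <| injOn_ofDigits (c := 1) (by norm_num)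
    (fun n => nonsquareDigit_le_one (n + i)) (fun n => nonsquareDigit_le_one (n + j)) h

end NonsquareDigits

section TranslationAmounts

variable {a : ℝ}

/-- The digits `dᵢ` of the IFS, normalised so that `Sᵢ x = (x + dᵢ) / 7`. -/
noncomputable def digit1 (a : ℝ) : Fin 3 → ℝ := ![0, 7 * a, 6]

theorem S1_eq_add_digit1_div (a : ℝ) (i : Fin 3) (x : ℝ) : S1 a i x = (x + digit1 a i) / 7 := by
  fin_cases i <;> simp [S1, digit1] <;> ring

theorem digit1_sub_cases (ha : a ∈ Icc 0 (6 / 7)) (i j : Fin 3) :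
    digit1 a j - digit1 a i = -6 ∨ digit1 a j - digit1 a i = 7 * a - 6 ∨
      digit1 a j - digit1 a i = -(7 * a) ∨ 0 ≤ digit1 a j - digit1 a i := by
  obtain ⟨h0, h6⟩ := ha
  fin_cases i <;> fin_cases j <;>
    simp only [digit1, Fin.zero_eta, Fin.mk_one, Fin.reduceFinMk, Matrix.cons_val] <;> grind

theorem Sw1_eq_add_mul (a : ℝ) (σ : List (Fin 3)) (x : ℝ) :
    Sw1 a σ x = Sw1 a σ 0 + x * ((7 : ℝ) ^ σ.length)⁻¹ := by
  induction σ generalizing x with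
  | nil => simp [Sw1]
  | cons i σ ih =>
    simp only [Sw1, Function.comp_apply, S1_eq_add_digit1_div, List.length_cons]
    rw [ih, pow_succ]
    field_simp
    ring

theorem Sw1_append_singleton (a : ℝ) (σ : List (Fin 3)) (i : Fin 3) (x : ℝ) :
    Sw1 a (σ ++ [i]) x = Sw1 a σ (S1 a i x) := by
  induction σ with
  | nil => simp [Sw1]
  | cons j σ ih => simp [Sw1, ih]

theorem Sw1_sub_Sw1 {σ τ : List (Fin 3)} (h : σ.length = τ.length) (z w : ℝ) :
    Sw1 a σ z - Sw1 a τ w = (z - w - amt1 a σ τ) * ((7 : ℝ) ^ σ.length)⁻¹ := by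
  rw [amt1, Sw1_eq_add_mul a σ z, Sw1_eq_add_mul a τ w, ← h]
  field_simp
  ring

theorem Sw1_eq_Sw1_iff {σ τ : List (Fin 3)} (h : σ.length = τ.length) {z w : ℝ} :
    Sw1 a σ z = Sw1 a τ w ↔ z - w = amt1 a σ τ := by
  rw [← sub_eq_zero, Sw1_sub_Sw1 h, mul_eq_zero, sub_eq_zero, or_iff_left (by positivity)]

theorem amt1_append_singleton {σ τ : List (Fin 3)} (h : σ.length = τ.length) (i j : Fin 3) :
    amt1 a (σ ++ [i]) (τ ++ [j]) = 7 * amt1 a σ τ + (digit1 a j - digit1 a i) := by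
  unfold amt1
  rw [Sw1_append_singleton, Sw1_append_singleton, Sw1_eq_add_mul a τ,
    Sw1_eq_add_mul a σ (S1 a i 0), S1_eq_add_digit1_div, S1_eq_add_digit1_div, ← h]
  simp only [List.length_append, List.length_singleton, pow_succ]
  field_simp
  ring

/-- The set of all translation amounts `a_{σ,τ}` between words of equal length. -/
def translationAmounts (a : ℝ) : Set ℝ :=
  {x | ∃ σ τ : List (Fin 3), σ.length = τ.length ∧ amt1 a σ τ = x}

theorem amt1_mem_translationAmounts {σ τ : List (Fin 3)} (h : σ.length = τ.length) :
    amt1 a σ τ ∈ translationAmounts a :=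
  ⟨σ, τ, h, rfl⟩

theorem zero_mem_translationAmounts : 0 ∈ translationAmounts a :=
  ⟨[], [], rfl, by simp [amt1]⟩

theorem step_mem_translationAmounts {x : ℝ} (hx : x ∈ translationAmounts a) (i j : Fin 3) :
    7 * x + (digit1 a j - digit1 a i) ∈ translationAmounts a := by
  obtain ⟨σ, τ, h, rfl⟩ := hx
  rw [← amt1_append_singleton h]
  exact amt1_mem_translationAmounts (by simp [h])

theorem translationAmounts_subset {A : Set ℝ} (zero_mem : 0 ∈ A)
    (step_mem : ∀ x ∈ A, ∀ i j, 7 * x + (digit1 a j - digit1 a i) ∈ A) :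
    translationAmounts a ⊆ A := by
  rintro _ ⟨σ, τ, h, rfl⟩
  induction σ using List.reverseRecOn generalizing τ with
  | nil =>
    obtain rfl := List.length_eq_zero_iff.mp h.symm
    simpa [amt1] using zero_mem
  | append_singleton σ i ih =>
    rcases List.eq_nil_or_concat τ with rfl | ⟨τ, j, rfl⟩
    · simp at h
    · rw [List.concat_eq_append] at h ⊢
      have h' : σ.length = τ.length := by simpa using h
      rw [amt1_append_singleton h']
      exact step_mem _ (ih τ h') i j

theorem image_Ioo_inter_image_Ioo_nonempty_iff {σ τ : List (Fin 3)} (h : σ.length = τ.length) :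
    (Sw1 a σ '' Ioo 0 1 ∩ Sw1 a τ '' Ioo 0 1).Nonempty ↔ |amt1 a σ τ| < 1 := by
  rw [abs_lt]
  constructor
  · rintro ⟨_, ⟨z, hz, rfl⟩, w, hw, hzw⟩
    rw [← (Sw1_eq_Sw1_iff h).mp hzw.symm]
    constructor <;> linarith [hz.1, hz.2, hw.1, hw.2]
  · rintro ⟨hl, hr⟩
    refine ⟨_, ⟨(1 + amt1 a σ τ) / 2, ⟨by linarith, by linarith⟩, rfl⟩,
      (1 - amt1 a σ τ) / 2, ⟨by linarith, by linarith⟩, ?_⟩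
    exact ((Sw1_eq_Sw1_iff h).mpr (by ring)).symm

theorem finite_Ntype1 (σ : List (Fin 3)) : (Ntype1 a σ).Finite := by
  refine ((List.finite_length_eq (Fin 3) σ.length).image (amt1 a σ)).subset ?_
  rintro _ ⟨τ, hτ, -, rfl⟩
  exact ⟨τ, hτ, rfl⟩

theorem FTCco1.finite_translationAmounts (h : FTCco1 a) :
    {x ∈ translationAmounts a | |x| < 1}.Finite := by
  refine (Set.Finite.sUnion h (forall_mem_range.mpr finite_Ntype1)).subset ?_
  rintro _ ⟨⟨σ, τ, hστ, rfl⟩, hlt⟩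
  exact ⟨_, ⟨σ, rfl⟩, τ, hστ.symm,
    (image_Ioo_inter_image_Ioo_nonempty_iff hστ).mpr hlt, rfl⟩

/-- The endpoint separation condition: endpoints of the intervals `S_σ([0, 1])` of level `k` are
equal or more than a fixed multiple of `7⁻ᵏ` apart. -/
def EndpointSep1 (a : ℝ) : Prop :=
  ∃ c > 0, ∀ σ τ : List (Fin 3), σ.length = τ.length →
    ∀ z ∈ ({0, 1} : Set ℝ), ∀ w ∈ ({0, 1} : Set ℝ),
      Sw1 a σ z = Sw1 a τ w ∨ c * ((7 : ℝ) ^ σ.length)⁻¹ < |Sw1 a σ z - Sw1 a τ w|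

theorem endpointSep1_of_translationAmounts {c : ℝ} (hc : 0 < c)
    (h : ∀ x ∈ translationAmounts a, ∀ v ∈ ({-1, 0, 1} : Set ℝ), v = x ∨ c < |v - x|) :
    EndpointSep1 a := by
  refine ⟨c, hc, fun σ τ hστ z hz w hw => ?_⟩
  have hzw : z - w ∈ ({-1, 0, 1} : Set ℝ) := by
    rcases hz with rfl | rfl <;> rcases hw with rfl | rfl <;> simp
  refine (h _ (amt1_mem_translationAmounts hστ) _ hzw).imp (Sw1_eq_Sw1_iff hστ).mpr fun hlt => ?_
  rw [Sw1_sub_Sw1 hστ, abs_mul, abs_of_pos (a := ((7 : ℝ) ^ σ.length)⁻¹) (by positivity)]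
  gcongr

end TranslationAmounts

/-- `t` is an orbit of translation amounts starting at `7 * a`, the amount between the words `1` and
`2`. Passing to the next term appends the letters `3`, `1` or `2`, `1` to the two words. The orbit
keeps distance `δ` from the critical values `1 - 7 * a` and `1`. -/
structure IsOverlapOrbit (a δ : ℝ) (t : ℕ → ℝ) : Prop where
  zero : t 0 = 7 * a
  succ : ∀ m, t (m + 1) = 7 * t m - 6 ∨ t (m + 1) = 7 * t m - 7 * a
  mem_Icc : ∀ m, t m ∈ Icc (1 - 7 * a + δ) (1 - δ)

/-- The absolute values that translation amounts can take when `t` is an overlap orbit with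
distance `δ` from the critical values. -/
def allowedModuli (δ : ℝ) (t : ℕ → ℝ) : Set ℝ := {0, 1} ∪ range t ∪ Ici (1 + δ)

namespace IsOverlapOrbit

variable {a δ x : ℝ} {t : ℕ → ℝ}

theorem digit_mem_Icc (ht : IsOverlapOrbit a δ t) : 7 * a ∈ Icc ((1 + δ) / 2) (1 - δ) := by
  obtain ⟨hl, hr⟩ := ht.zero ▸ ht.mem_Icc 0
  exact ⟨by linarith, hr⟩

theorem margin_le (ht : IsOverlapOrbit a δ t) : δ ≤ 1 / 3 := by
  obtain ⟨hl, hr⟩ := ht.digit_mem_Icc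
  linarith

theorem param_mem_Ioo (ht : IsOverlapOrbit a δ t) (hδ : 0 < δ) : a ∈ Ioo 0 (1 / 7) := by
  obtain ⟨hl, hr⟩ := ht.digit_mem_Icc
  exact ⟨by linarith, by linarith⟩

theorem mem_Icc_margin (ht : IsOverlapOrbit a δ t) (hδ : 0 < δ) (m : ℕ) :
    t m ∈ Icc δ (1 - δ) := by
  obtain ⟨hl, hr⟩ := ht.mem_Icc m
  exact ⟨by linarith [(ht.param_mem_Ioo hδ).2], hr⟩

theorem param_mem_Icc (ht : IsOverlapOrbit a δ t) (hδ : 0 < δ) : a ∈ Icc 0 (6 / 7) :=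
  Icc_subset_Icc_right (by norm_num) (Ioo_subset_Icc_self (ht.param_mem_Ioo hδ))

theorem abs_digit1_sub_mem (ht : IsOverlapOrbit a δ t) (hδ : 0 < δ) (i j : Fin 3) :
    |digit1 a j - digit1 a i| ∈ allowedModuli δ t := by
  wlog hle : digit1 a j ≤ digit1 a i generalizing i j
  · rw [abs_sub_comm]
    exact this j i (le_of_not_ge hle)
  obtain ⟨hl, hr⟩ := ht.digit_mem_Icc
  rw [abs_of_nonpos (by linarith)]
  rcases digit1_sub_cases (ht.param_mem_Icc hδ) i j with h | h | h | h
  · exact .inr (show 1 + δ ≤ _ by linarith)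
  · exact .inr (show 1 + δ ≤ _ by linarith)
  · exact .inl (.inr ⟨0, by linarith [ht.zero]⟩)
  · exact .inl (.inl (.inl (by linarith)))

theorem abs_step_orbit_mem (ht : IsOverlapOrbit a δ t) (hδ : 0 < δ) (m : ℕ) (i j : Fin 3) :
    |7 * t m + (digit1 a j - digit1 a i)| ∈ allowedModuli δ t := by
  obtain ⟨hl, hr⟩ := ht.digit_mem_Icc
  obtain ⟨hl', hr'⟩ := ht.mem_Icc (m + 1)
  have outside {y : ℝ} (hy : 1 + δ ≤ y ∨ 1 + δ ≤ -y) : |y| ∈ allowedModuli δ t :=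
    .inr (le_abs.mpr hy)
  have next {y : ℝ} (hy : y = t (m + 1)) : |y| ∈ allowedModuli δ t := by
    rw [hy, abs_of_pos (by linarith)]
    exact .inl (.inr ⟨m + 1, rfl⟩)
  rcases ht.succ m with hsucc | hsucc
  · rcases digit1_sub_cases (ht.param_mem_Icc hδ) i j with h | h | h | h
    · exact next (by linarith)
    · exact outside (.inl (by linarith))
    · exact outside (.inl (by linarith))
    · exact outside (.inl (by linarith))
  · rcases digit1_sub_cases (ht.param_mem_Icc hδ) i j with h | h | h | h
    · exact outside (.inr (by linarith))
    · exact outside (.inr (by linarith))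
    · exact next (by linarith)
    · exact outside (.inl (by linarith))

theorem abs_step_mem_of_one_le (ht : IsOverlapOrbit a δ t) (hδ : 0 < δ)
    (hx : x = 1 ∨ 1 + δ ≤ x) (i j : Fin 3) :
    |7 * x + (digit1 a j - digit1 a i)| ∈ allowedModuli δ t := by
  obtain ⟨hl, hr⟩ := ht.digit_mem_Icc
  have outside {y : ℝ} (hy : 1 + δ ≤ y) : |y| ∈ allowedModuli δ t :=
    .inr (le_abs.mpr (.inl hy))
  have hx1 : 1 ≤ x := by rcases hx with h | h <;> linarith
  rcases digit1_sub_cases (ht.param_mem_Icc hδ) i j with h | h | h | h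
  · rcases hx with rfl | hx
    · exact .inl (.inl (.inr (by norm_num [h])))
    · exact outside (by linarith)
  · exact outside (by linarith)
  · exact outside (by linarith)
  · exact outside (by linarith)

theorem abs_step_mem (ht : IsOverlapOrbit a δ t) (hδ : 0 < δ) (hx : |x| ∈ allowedModuli δ t)
    (i j : Fin 3) : |7 * x + (digit1 a j - digit1 a i)| ∈ allowedModuli δ t := by
  wlog hx0 : 0 ≤ x generalizing x i j
  · have h := this (x := -x) (by rwa [abs_neg]) j i (by linarith)
    rwa [← abs_neg, show -(7 * -x + (digit1 a i - digit1 a j)) =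
      7 * x + (digit1 a j - digit1 a i) by ring] at h
  rw [abs_of_nonneg hx0] at hx
  rcases hx with ((rfl | hx) | ⟨m, rfl⟩) | hx
  · simpa using ht.abs_digit1_sub_mem hδ i j
  · exact ht.abs_step_mem_of_one_le hδ (.inl hx) i j
  · exact ht.abs_step_orbit_mem hδ m i j
  · exact ht.abs_step_mem_of_one_le hδ (.inr hx) i j

theorem abs_mem_allowedModuli (ht : IsOverlapOrbit a δ t) (hδ : 0 < δ)
    (hx : x ∈ translationAmounts a) : |x| ∈ allowedModuli δ t :=
  translationAmounts_subset (A := {x | |x| ∈ allowedModuli δ t})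
    (.inl (.inl (.inl abs_zero))) (fun _ hx => ht.abs_step_mem hδ hx) hx

theorem mem_translationAmounts (ht : IsOverlapOrbit a δ t) (m : ℕ) :
    t m ∈ translationAmounts a := by
  induction m with
  | zero =>
    convert step_mem_translationAmounts zero_mem_translationAmounts 0 1 using 1
    simp [ht.zero, digit1]
  | succ m ih =>
    rcases ht.succ m with h | h
    · convert step_mem_translationAmounts ih 2 0 using 1
      simp [h, digit1, sub_eq_add_neg]
    · convert step_mem_translationAmounts ih 1 0 using 1
      simp [h, digit1, sub_eq_add_neg]

theorem wsp1 (ht : IsOverlapOrbit a δ t) (hδ : 0 < δ) : WSP1 a := by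
  have hδ1 : δ ≤ 1 := ht.margin_le.trans (by norm_num)
  refine ⟨δ, hδ, fun σ τ h hne => ?_⟩
  rcases ht.abs_mem_allowedModuli hδ (amt1_mem_translationAmounts h) with
    ((h0 | h1) | ⟨m, hm⟩) | hge
  · exact absurd (abs_eq_zero.mp h0) hne
  · exact hδ1.trans_eq h1.symm
  · exact (ht.mem_Icc_margin hδ m).1.trans_eq hm
  · exact (le_add_of_nonneg_left zero_le_one).trans hge

theorem eq_or_le_abs_sub (ht : IsOverlapOrbit a δ t) (hδ : 0 < δ) (hx : |x| ∈ allowedModuli δ t)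
    {v : ℝ} (hv : v ∈ ({-1, 0, 1} : Set ℝ)) : v = x ∨ δ ≤ |v - x| := by
  have hδ1 : δ ≤ 1 := ht.margin_le.trans (by norm_num)
  have hv01 : |v| = 0 ∨ |v| = 1 := by rcases hv with rfl | rfl | rfl <;> simp
  have far (h : δ ≤ |v| - |x| ∨ δ ≤ -(|v| - |x|)) : δ ≤ |v - x| :=
    (le_abs.mpr h).trans (abs_abs_sub_abs_le v x)
  have opposite (h : |v| = 1) (hvx : v = -x) : δ ≤ |v - x| := by
    rw [show v - x = 2 * v by linarith, abs_mul, h, abs_two]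
    linarith
  rcases hx with ((hx | hx) | ⟨m, hx⟩) | hx
  · rcases hv01 with hv | hv
    · exact .inl ((abs_eq_zero.mp hv).trans (abs_eq_zero.mp hx).symm)
    · exact .inr (far (.inl (by linarith)))
  · have hx : |x| = 1 := hx
    rcases hv01 with hv | hv
    · exact .inr (far (.inr (by linarith)))
    · exact (abs_eq_abs.mp (hv.trans hx.symm)).imp_right (opposite hv)
  · obtain ⟨hl, hr⟩ := ht.mem_Icc_margin hδ m
    rcases hv01 with hv | hv
    · exact .inr (far (.inr (by linarith)))
    · exact .inr (far (.inl (by linarith)))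
  · have hx : 1 + δ ≤ |x| := hx
    rcases hv01 with hv | hv <;> exact .inr (far (.inr (by linarith)))

theorem endpointSep1 (ht : IsOverlapOrbit a δ t) (hδ : 0 < δ) : EndpointSep1 a :=
  endpointSep1_of_translationAmounts (half_pos hδ) fun _ hx _ hv =>
    (ht.eq_or_le_abs_sub hδ (ht.abs_mem_allowedModuli hδ hx) hv).imp_right
      (half_lt_self hδ).trans_le

theorem not_FTCco1 (ht : IsOverlapOrbit a δ t) (hδ : 0 < δ) (hinj : Function.Injective t) :
    ¬FTCco1 a := by
  intro h
  refine infinite_range_of_injective hinj (h.finite_translationAmounts.subset ?_)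
  rintro _ ⟨m, rfl⟩
  obtain ⟨hl, hr⟩ := ht.mem_Icc_margin hδ m
  exact ⟨ht.mem_translationAmounts m, abs_lt.mpr ⟨by linarith, by linarith⟩⟩

end IsOverlapOrbit

section Attractor

variable {a : ℝ} {K : Set ℝ}

theorem contractingWith_S1 (a : ℝ) (i : Fin 3) : ContractingWith (1 / 7) (S1 a i) := by
  refine ⟨by rw [← NNReal.coe_lt_coe]; norm_num, LipschitzWith.of_dist_le_mul fun x y => ?_⟩
  rw [S1_eq_add_digit1_div, S1_eq_add_digit1_div, Real.dist_eq, Real.dist_eq, ← sub_div,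
    add_sub_add_right_eq_sub, abs_div]
  norm_num
  linarith

theorem mem_of_isFixedPt_of_mapsTo {α : Type*} [MetricSpace α] {C : NNReal} {f : α → α}
    (hf : ContractingWith C f) {s : Set α} (hs : IsComplete s) (hne : s.Nonempty)
    (hmaps : MapsTo f s s) {x : α} (hx : Function.IsFixedPt f x) : x ∈ s := by
  obtain ⟨y, hy⟩ := hne
  obtain ⟨z, hz, hfz, -⟩ :=
    ContractingWith.exists_fixedPoint' hs hmaps (hf.restrict hmaps) hy (edist_ne_top _ _)
  rwa [hf.fixedPoint_unique' hx hfz]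

theorem mapsTo_S1_of_eq_iUnion (hK : K = ⋃ i, S1 a i '' K) (i : Fin 3) :
    MapsTo (S1 a i) K K := fun x hx => by
  rw [hK]
  exact mem_iUnion_of_mem i (mem_image_of_mem _ hx)

theorem exists_S1_eq_of_eq_iUnion (hK : K = ⋃ i, S1 a i '' K) {x : ℝ} (hx : x ∈ K) :
    ∃ y ∈ K, x = y / 7 ∨ x = y / 7 + a ∨ x = y / 7 + 6 / 7 := by
  rw [hK] at hx
  obtain ⟨i, y, hy, rfl⟩ := mem_iUnion.mp hx
  refine ⟨y, hy, ?_⟩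
  fin_cases i <;> simp [S1]

theorem endpoints_subset_attractor (hne : K.Nonempty) (hc : IsCompact K)
    (hK : K = ⋃ i, S1 a i '' K) : {0, 1} ⊆ K := by
  have fixedPt_mem {i : Fin 3} {x : ℝ} (hx : S1 a i x = x) : x ∈ K :=
    mem_of_isFixedPt_of_mapsTo (contractingWith_S1 a i) hc.isComplete hne
      (mapsTo_S1_of_eq_iUnion hK i) hx
  rintro x (rfl | rfl)
  · exact fixedPt_mem (i := 0) (by simp [S1])
  · exact fixedPt_mem (i := 2) (by simp only [S1, Matrix.cons_val]; norm_num)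

theorem attractor_subset_Icc (ha : a ∈ Icc 0 (6 / 7)) (hne : K.Nonempty) (hc : IsCompact K)
    (hK : K = ⋃ i, S1 a i '' K) : K ⊆ Icc 0 1 := by
  obtain ⟨M, hM, hMax⟩ := hc.exists_isGreatest hne
  obtain ⟨l, hl, hMin⟩ := hc.exists_isLeast hne
  have hM1 : M ≤ 1 := by
    obtain ⟨y, hy, h⟩ := exists_S1_eq_of_eq_iUnion hK hM
    rcases h with h | h | h <;> linarith [hMax hy, ha.2]
  have hl0 : 0 ≤ l := by
    obtain ⟨y, hy, h⟩ := exists_S1_eq_of_eq_iUnion hK hl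
    rcases h with h | h | h <;> linarith [hMin hy, ha.1]
  exact fun x hx => ⟨hl0.trans (hMin hx), (hMax hx).trans hM1⟩

theorem attractor_ne_Icc (ha : a ∈ Ico 0 (5 / 7)) (hK : K = ⋃ i, S1 a i '' K) :
    K ≠ Icc 0 1 := by
  obtain ⟨h0, h5⟩ := ha
  rintro rfl
  -- the midpoint of the gap `(1 / 7 + a, 6 / 7)` between the images of `[0, 1]`
  have hgap : (1 + a) / 2 ∈ Icc (0 : ℝ) 1 := ⟨by linarith, by linarith⟩
  obtain ⟨y, ⟨hy0, hy1⟩, h | h | h⟩ := exists_S1_eq_of_eq_iUnion hK hgap <;> linarith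

end Attractor

section Construction

/-- The parameter `a` for which the orbit of `7 * a` starts at `1 - (6 - 7 * a) * u`. -/
noncomputable def overlapParam (u : ℝ) : ℝ := (1 - 6 * u) / (7 * (1 - u))

/-- The image of the sequence `s` under the substitution `x = 1 - (6 - 7 * a) * s` that conjugates
the branches of the overlap orbit to `7 * s` and `7 * s - 1`. Here `a = overlapParam (s 0)`, for
which `6 - 7 * a = 5 / (1 - s 0)`. -/
noncomputable def overlapOrbit (s : ℕ → ℝ) (m : ℕ) : ℝ := 1 - 5 / (1 - s 0) * s m

theorem seven_mul_overlapParam {u : ℝ} (hu : u ≠ 1) : 7 * overlapParam u = 6 - 5 / (1 - u) := by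
  have hu' : 1 - u ≠ 0 := sub_ne_zero.mpr hu.symm
  unfold overlapParam
  field_simp
  ring

theorem isOverlapOrbit_overlapOrbit {s : ℕ → ℝ} {η : ℝ} (hη : 0 ≤ η) (h0 : s 0 ≤ 1 / 42)
    (hs : ∀ m, s m ∈ Icc η (1 / 6))
    (hsucc : ∀ m, s (m + 1) = 7 * s m ∨ s (m + 1) = 7 * s m - 1) :
    IsOverlapOrbit (overlapParam (s 0)) η (overlapOrbit s) where
  zero := by
    have h1 : 1 - s 0 ≠ 0 := by linarith
    rw [overlapOrbit, seven_mul_overlapParam (by linarith)]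
    field_simp
    ring
  succ m := by
    rw [overlapOrbit, overlapOrbit, seven_mul_overlapParam (by linarith)]
    rcases hsucc m with h | h <;> rw [h]
    · exact .inl (by ring)
    · exact .inr (by ring)
  mem_Icc m := by
    have hpos : 0 < 1 - s 0 := by linarith
    obtain ⟨hl, hr⟩ := hs m
    have hlow : η ≤ 5 / (1 - s 0) * s m := by
      have hone : 1 ≤ 5 / (1 - s 0) := by
        rw [one_le_div hpos]
        linarith [(hs 0).1]
      exact hl.trans (le_mul_of_one_le_left (hη.trans hl) hone)
    have hhigh : 5 / (1 - s 0) * (1 + s m) ≤ 6 - η := by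
      rw [div_mul_eq_mul_div, div_le_iff₀ hpos]
      nlinarith [(hs 0).1]
    rw [overlapOrbit, seven_mul_overlapParam (by linarith)]
    exact ⟨by linarith, by linarith⟩

theorem overlapOrbit_injective {s : ℕ → ℝ} (h0 : s 0 ≠ 1) (hs : Function.Injective s) :
    Function.Injective (overlapOrbit s) := fun _ _ h => hs <|
  mul_left_cancel₀ (div_ne_zero (by norm_num) (sub_ne_zero.mpr h0.symm)) (sub_right_injective h)

end Construction

theorem stmt15 : ∃ a ∈ Ioo (0 : ℝ) (1 / 7),
    WSP1 a ∧
    (∃ c > 0, ∀ σ τ : List (Fin 3), σ.length = τ.length →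
      ∀ z ∈ ({0, 1} : Set ℝ), ∀ w ∈ ({0, 1} : Set ℝ),
        Sw1 a σ z = Sw1 a τ w ∨
          c * ((7 : ℝ) ^ σ.length)⁻¹ < |Sw1 a σ z - Sw1 a τ w|) ∧
    ¬ FTCco1 a ∧
    ∀ K : Set ℝ, K.Nonempty → IsCompact K → K = ⋃ i, S1 a i '' K →
      ({0, 1} : Set ℝ) ⊆ K ∧ K ⊆ Icc 0 1 ∧ K ≠ Icc 0 1 := by
  have hδ : (0 : ℝ) < 1 / 343 := by norm_num
  have orbit : IsOverlapOrbit (overlapParam (nonsquareTail 0)) (1 / 343)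
      (overlapOrbit nonsquareTail) :=
    isOverlapOrbit_overlapOrbit hδ.le nonsquareTail_zero_le
      (fun m => ⟨le_nonsquareTail m, nonsquareTail_le m⟩) nonsquareTail_succ
  have orbit_injective : Function.Injective (overlapOrbit nonsquareTail) :=
    overlapOrbit_injective (by linarith [nonsquareTail_zero_le]) nonsquareTail_injective
  obtain ⟨ha0, ha⟩ := orbit.param_mem_Ioo hδ
  exact ⟨_, ⟨ha0, ha⟩, orbit.wsp1 hδ, orbit.endpointSep1 hδ, orbit.not_FTCco1 hδ orbit_injective,
    fun K hne hc hK => ⟨endpoints_subset_attractor hne hc hK,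
      attractor_subset_Icc (orbit.param_mem_Icc hδ) hne hc hK,
      attractor_ne_Icc ⟨ha0.le, by linarith⟩ hK⟩⟩
end
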